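/- A Gini mean G_{p,q} on (0,∞) is a weak-Hardy mean if and only if min(p,q) ≤ 0 and max(p,q) < 1, which holds if and only if G_{p,q} is a Hardy mean. -/

import Mathlib

open Finset in
/-- The Gini mean `G_{p,q}` of a tuple of positive reals. -/
noncomputable def gini (p q : ℝ) (n : ℕ) (a : Fin n → ℝ) : ℝ :=
  if p = q then
    Real.exp ((∑ i, a i ^ p * Real.log (a i)) / (∑ i, a i ^ p))
  else
    ((∑ i, a i ^ p) / (∑ i, a i ^ q)) ^ (1 / (p - q))

/-- The Gini mean `G_{p,q}` is a weak-Hardy mean: the running means of every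
summable positive sequence form a summable sequence. -/
def GiniWeakHardy (p q : ℝ) : Prop :=
  ∀ a : ℕ → ℝ, (∀ n, 0 < a n) → Summable a →
    Summable (fun n => gini p q (n + 1) (fun k : Fin (n + 1) => a (k : ℕ)))

/-- The Gini mean `G_{p,q}` is a Hardy mean: there is a finite constant `C`
bounding the sum of running means by `C` times the sum. -/
def GiniHardy (p q : ℝ) : Prop :=
  ∃ C : ℝ, ∀ a : ℕ → ℝ, (∀ n, 0 < a n) → Summable a →
    Summable (fun n => gini p q (n + 1) (fun k : Fin (n + 1) => a (k : ℕ))) ∧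
    ∑' n, gini p q (n + 1) (fun k : Fin (n + 1) => a (k : ℕ)) ≤ C * ∑' n, a n

/-!
Put `F t = log ∑ᵢ aᵢ ^ t`. Then `log G_{p,q}` is the slope of `F` between `q` and `p` (the
derivative `F' p` when `p = q`), and `F` is convex by Hölder's inequality, so `G_{p,q}` is symmetric
and nondecreasing in both parameters. Being a (weak-)Hardy mean therefore passes to smaller
parameters, and three extreme cases decide everything.

* For `0 < r < 1`, `G_{r,0}` is the power mean of exponent `r`, and Hardy's inequality applies.
* For distinct `p, q > 0`, the means of `1, 1/2, 1/4, …` tend to a positive limit.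
* For `q < 0`, a summable sequence of size `1 / (n (log n) ^ (1 - 1/q))` has means `G_{1,q}` at
  least of size `1 / (n log n)`, the series of which diverges.
-/

open Finset Filter Topology

section LogPowerSum

variable {ι : Type*} [Fintype ι]

/-- The logarithm of the power sum `∑ i, a i ^ t` as a function of the exponent `t`. The logarithm
of `G_{p,q}` is its slope between `q` and `p`. -/
noncomputable def logPowerSum (a : ι → ℝ) (t : ℝ) : ℝ :=
  Real.log (∑ i, a i ^ t)

variable {a : ι → ℝ}

lemma sum_rpow_mul_add_mul_le (ha : ∀ i, 0 < a i) {u v : ℝ} (hu : 0 < u) (hv : 0 < v)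
    (huv : u + v = 1) (x y : ℝ) :
    ∑ i, a i ^ (u * x + v * y) ≤ (∑ i, a i ^ x) ^ u * (∑ i, a i ^ y) ^ v := by
  have rpow_cancel (t : ℝ) {w : ℝ} (hw : 0 < w) (i : ι) : ((a i ^ t) ^ w) ^ w⁻¹ = a i ^ t :=
    Real.rpow_rpow_inv (Real.rpow_nonneg (ha i).le t) hw.ne'
  have rpow_split (i : ι) : a i ^ (u * x + v * y) = (a i ^ x) ^ u * (a i ^ y) ^ v := by
    rw [Real.rpow_add (ha i), mul_comm u, mul_comm v, Real.rpow_mul (ha i).le,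
      Real.rpow_mul (ha i).le]
  have holder := Real.inner_le_Lp_mul_Lq_of_nonneg univ (Real.HolderConjugate.inv_inv hu hv huv)
    (f := fun i => (a i ^ x) ^ u) (g := fun i => (a i ^ y) ^ v)
    (fun i _ => Real.rpow_nonneg (Real.rpow_nonneg (ha i).le x) u)
    (fun i _ => Real.rpow_nonneg (Real.rpow_nonneg (ha i).le y) v)
  simpa only [← rpow_split, rpow_cancel x hu, rpow_cancel y hv, one_div, inv_inv] using holder

variable [Nonempty ι]

lemma sum_rpow_pos (ha : ∀ i, 0 < a i) (t : ℝ) : 0 < ∑ i, a i ^ t :=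
  sum_pos (fun i _ => Real.rpow_pos_of_pos (ha i) t) univ_nonempty

lemma convexOn_logPowerSum (ha : ∀ i, 0 < a i) : ConvexOn ℝ Set.univ (logPowerSum a) := by
  refine convexOn_iff_forall_pos.2 ⟨convex_univ, fun x _ y _ u v hu hv huv => ?_⟩
  have hx := sum_rpow_pos ha x
  have hy := sum_rpow_pos ha y
  calc logPowerSum a (u • x + v • y)
      ≤ Real.log ((∑ i, a i ^ x) ^ u * (∑ i, a i ^ y) ^ v) :=
        Real.log_le_log (sum_rpow_pos ha _) (sum_rpow_mul_add_mul_le ha hu hv huv x y)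
    _ = u • logPowerSum a x + v • logPowerSum a y := by
        rw [Real.log_mul (Real.rpow_pos_of_pos hx u).ne' (Real.rpow_pos_of_pos hy v).ne',
          Real.log_rpow hx, Real.log_rpow hy]
        rfl

lemma hasDerivAt_logPowerSum (ha : ∀ i, 0 < a i) (t : ℝ) :
    HasDerivAt (logPowerSum a) ((∑ i, a i ^ t * Real.log (a i)) / ∑ i, a i ^ t) t :=
  (HasDerivAt.fun_sum fun i _ => (Real.hasStrictDerivAt_const_rpow (ha i) t).hasDerivAt).log
    (sum_rpow_pos ha t).ne'

end LogPowerSum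

lemma monotoneOn_dslope_of_convexOn {S : Set ℝ} {f : ℝ → ℝ} (hf : ConvexOn ℝ S f) {c : ℝ}
    (hc : c ∈ S) (hd : DifferentiableAt ℝ f c) : MonotoneOn (dslope f c) S := by
  intro x hx y hy hxy
  rcases hxy.eq_or_lt with rfl | hlt
  · exact le_rfl
  rcases eq_or_ne x c with rfl | hxc
  · rw [dslope_same, dslope_of_ne f hlt.ne']
    exact hf.deriv_le_slope hx hy hlt hd
  rcases eq_or_ne y c with rfl | hyc
  · rw [dslope_same, dslope_of_ne f hxc, slope_comm]
    exact hf.slope_le_deriv hx hy hlt hd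
  · rw [dslope_of_ne f hxc, dslope_of_ne f hyc]
    exact hf.slope_mono hc ⟨hx, hxc⟩ ⟨hy, hyc⟩ hxy

lemma dslope_comm {𝕜 E : Type*} [NontriviallyNormedField 𝕜] [NormedAddCommGroup E]
    [NormedSpace 𝕜 E] (f : 𝕜 → E) (x y : 𝕜) : dslope f x y = dslope f y x := by
  rcases eq_or_ne x y with rfl | hxy
  · rfl
  · rw [dslope_of_ne f hxy.symm, dslope_of_ne f hxy, slope_comm]

section Gini

variable {n : ℕ} [NeZero n] {a : Fin n → ℝ}

lemma gini_eq_exp_dslope (ha : ∀ i, 0 < a i) (p q : ℝ) :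
    gini p q n a = Real.exp (dslope (logPowerSum a) q p) := by
  rcases eq_or_ne p q with rfl | hpq
  · rw [gini, if_pos rfl, dslope_same, (hasDerivAt_logPowerSum ha p).deriv]
  · have hp := sum_rpow_pos ha p
    have hq := sum_rpow_pos ha q
    rw [gini, if_neg hpq, Real.rpow_def_of_pos (div_pos hp hq), Real.log_div hp.ne' hq.ne',
      mul_one_div, dslope_of_ne _ hpq, slope_def_field, logPowerSum, logPowerSum]

lemma gini_pos (ha : ∀ i, 0 < a i) (p q : ℝ) : 0 < gini p q n a := by
  rw [gini_eq_exp_dslope ha]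
  exact Real.exp_pos _

lemma gini_comm (ha : ∀ i, 0 < a i) (p q : ℝ) : gini p q n a = gini q p n a := by
  rw [gini_eq_exp_dslope ha, gini_eq_exp_dslope ha, dslope_comm]

lemma gini_mono_left (ha : ∀ i, 0 < a i) {p p' : ℝ} (hp : p ≤ p') (q : ℝ) :
    gini p q n a ≤ gini p' q n a := by
  rw [gini_eq_exp_dslope ha, gini_eq_exp_dslope ha, Real.exp_le_exp]
  exact monotoneOn_dslope_of_convexOn (convexOn_logPowerSum ha) trivial
    (hasDerivAt_logPowerSum ha q).differentiableAt trivial trivial hp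

lemma gini_mono (ha : ∀ i, 0 < a i) {p p' q q' : ℝ} (hp : p ≤ p') (hq : q ≤ q') :
    gini p q n a ≤ gini p' q' n a :=
  calc gini p q n a ≤ gini p' q n a := gini_mono_left ha hp q
    _ = gini q p' n a := gini_comm ha p' q
    _ ≤ gini q' p' n a := gini_mono_left ha hq p'
    _ = gini p' q' n a := gini_comm ha q' p'

end Gini

lemma GiniWeakHardy.symm {p q : ℝ} (h : GiniWeakHardy p q) : GiniWeakHardy q p :=
  fun a ha hsum => (h a ha hsum).congr fun _ => gini_comm (fun k => ha k) p q

lemma GiniWeakHardy.mono {p p' q q' : ℝ} (h : GiniWeakHardy p' q') (hp : p ≤ p') (hq : q ≤ q') :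
    GiniWeakHardy p q :=
  fun a ha hsum => (h a ha hsum).of_nonneg_of_le (fun _ => (gini_pos (fun k => ha k) p q).le)
    fun _ => gini_mono (fun k => ha k) hp hq

lemma GiniHardy.giniWeakHardy {p q : ℝ} : GiniHardy p q → GiniWeakHardy p q :=
  fun ⟨_, hC⟩ a ha hsum => (hC a ha hsum).1

lemma GiniHardy.symm {p q : ℝ} : GiniHardy p q → GiniHardy q p := by
  rintro ⟨C, hC⟩
  refine ⟨C, fun a ha hsum => ?_⟩
  simpa only [gini_comm (a := fun k : Fin (_ + 1) => a k) (fun k => ha k) q p] using hC a ha hsum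

lemma GiniHardy.mono {p p' q q' : ℝ} (h : GiniHardy p' q') (hp : p ≤ p') (hq : q ≤ q') :
    GiniHardy p q := by
  have hweak := h.giniWeakHardy
  obtain ⟨C, hC⟩ := h
  refine ⟨C, fun a ha hsum => ⟨hweak.mono hp hq a ha hsum, ?_⟩⟩
  exact ((hweak.mono hp hq a ha hsum).tsum_le_tsum (fun _ => gini_mono (fun k => ha k) hp hq)
    (hweak a ha hsum)).trans (hC a ha hsum).2

section HardyInequality

variable {s t : ℝ}

lemma rpow_sub_one_mul_le (hst : s.HolderConjugate t) {x y : ℝ} (hx : 0 ≤ x) (hy : 0 ≤ y) :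
    x ^ (s - 1) * y ≤ x ^ s / t + y ^ s / s := by
  have h := Real.young_inequality_of_nonneg (Real.rpow_nonneg hx (s - 1)) hy hst.symm
  rwa [← Real.rpow_mul hx, hst.sub_one_mul_conj] at h

-- One step of Elliott's proof of Hardy's inequality: `B` is the mean of `m` terms, and `A` is the
-- mean once the term `b` is added.
lemma rpow_add_mul_sub_rpow_le (hst : s.HolderConjugate t) {A B b m : ℝ} (hA : 0 ≤ A) (hB : 0 ≤ B)
    (hb : 0 ≤ b) (hm : 0 ≤ m) (h : (m + 1) * A = m * B + b) :
    A ^ s + t * ((m + 1) * A ^ s - m * B ^ s) ≤ t ^ s * b ^ s := by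
  have hs := hst.pos
  have ht := hst.symm.pos
  have rpow_eq : A ^ (s - 1) * A = A ^ s := by
    rw [← Real.rpow_add_one' hA (by simpa using hs.ne'), sub_add_cancel]
  have young : s * (t * ((m + 1) * A ^ s)) ≤
      s * m * A ^ s + t * m * B ^ s + (s - 1) * A ^ s + t ^ s * b ^ s :=
    calc s * (t * ((m + 1) * A ^ s))
        = s * (t * m * (A ^ (s - 1) * B) + A ^ (s - 1) * (t * b)) := by
          rw [← rpow_eq]
          linear_combination s * t * A ^ (s - 1) * h
      _ ≤ s * (t * m * (A ^ s / t + B ^ s / s) + (A ^ s / t + (t * b) ^ s / s)) := by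
          gcongr
          · exact rpow_sub_one_mul_le hst hA hB
          · exact rpow_sub_one_mul_le hst hA (mul_nonneg ht.le hb)
      _ = s * m * A ^ s + t * m * B ^ s + (s - 1) * A ^ s + t ^ s * b ^ s := by
          rw [Real.mul_rpow ht.le hb, ← hst.div_conj_eq_sub_one]
          field_simp
          ring
  linear_combination young - (m + 1) * A ^ s * hst.mul_eq_add

lemma hardy_sum_range_le (hst : s.HolderConjugate t) {b : ℕ → ℝ} (hb : ∀ n, 0 ≤ b n) (N : ℕ) :
    ∑ n ∈ range N, ((∑ k ∈ range (n + 1), b k) / (n + 1 : ℝ)) ^ s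
      ≤ t ^ s * ∑ n ∈ range N, b n ^ s := by
  have ht := hst.symm.pos
  have mean_nonneg (n : ℕ) : 0 ≤ (∑ k ∈ range n, b k) / (n : ℝ) :=
    div_nonneg (sum_nonneg fun k _ => hb k) n.cast_nonneg
  -- The extra boundary term makes the one-step bounds telescope.
  suffices telescoped : ∑ n ∈ range N, ((∑ k ∈ range (n + 1), b k) / (n + 1 : ℝ)) ^ s
      + t * (N * ((∑ k ∈ range N, b k) / N) ^ s) ≤ t ^ s * ∑ n ∈ range N, b n ^ s by
    have boundary_nonneg : 0 ≤ t * (N * ((∑ k ∈ range N, b k) / N) ^ s) :=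
      mul_nonneg ht.le (mul_nonneg N.cast_nonneg (Real.rpow_nonneg (mean_nonneg N) s))
    linarith
  induction N with
  | zero => simp
  | succ N ih =>
    have mean_succ : ((N : ℝ) + 1) * ((∑ k ∈ range (N + 1), b k) / (N + 1 : ℝ))
        = N * ((∑ k ∈ range N, b k) / N) + b N := by
      rw [mul_div_cancel₀ _ (by positivity), sum_range_succ]
      rcases N.eq_zero_or_pos with rfl | hN
      · simp
      · rw [mul_div_cancel₀ _ (by positivity)]
    have step := rpow_add_mul_sub_rpow_le hst (by exact_mod_cast mean_nonneg (N + 1))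
      (mean_nonneg N) (hb N) N.cast_nonneg mean_succ
    rw [sum_range_succ, sum_range_succ (fun n => b n ^ s)]
    push_cast
    linarith

end HardyInequality

lemma gini_zero_right {r : ℝ} (hr : r ≠ 0) (a : ℕ → ℝ) (n : ℕ) :
    gini r 0 (n + 1) (fun k : Fin (n + 1) => a k) =
      ((∑ k ∈ range (n + 1), a k ^ r) / (n + 1 : ℝ)) ^ r⁻¹ := by
  rw [gini, if_neg hr, ← sum_range fun k => a k ^ r]
  simp

lemma sum_range_gini_zero_right_le {r : ℝ} (hr0 : 0 < r) (hr1 : r < 1) {a : ℕ → ℝ}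
    (ha : ∀ n, 0 ≤ a n) (N : ℕ) :
    ∑ n ∈ range N, gini r 0 (n + 1) (fun k : Fin (n + 1) => a k) ≤
      (1 - r)⁻¹ ^ r⁻¹ * ∑ n ∈ range N, a n := by
  have hardy := hardy_sum_range_le (Real.HolderConjugate.inv_one_sub_inv hr0 hr1)
    (fun n => Real.rpow_nonneg (ha n) r) N
  simpa only [gini_zero_right hr0.ne', Real.rpow_rpow_inv (ha _) hr0.ne'] using hardy

lemma giniHardy_zero_right {r : ℝ} (hr0 : 0 < r) (hr1 : r < 1) : GiniHardy r 0 := by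
  refine ⟨(1 - r)⁻¹ ^ r⁻¹, fun a ha hsum => ?_⟩
  have gini_nonneg (n : ℕ) : 0 ≤ gini r 0 (n + 1) (fun k : Fin (n + 1) => a k) :=
    (gini_pos (fun k => ha k) r 0).le
  have partial_le (N : ℕ) : ∑ n ∈ range N, gini r 0 (n + 1) (fun k : Fin (n + 1) => a k) ≤
      (1 - r)⁻¹ ^ r⁻¹ * ∑' n, a n :=
    (sum_range_gini_zero_right_le hr0 hr1 (fun n => (ha n).le) N).trans <|
      mul_le_mul_of_nonneg_left (hsum.sum_le_tsum _ fun n _ => (ha n).le)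
        (Real.rpow_nonneg (inv_nonneg.2 (sub_nonneg.2 hr1.le)) _)
  exact ⟨summable_of_sum_range_le gini_nonneg partial_le,
    Real.tsum_le_of_sum_range_le gini_nonneg partial_le⟩

lemma giniHardy_of_min_nonpos_of_max_lt_one {p q : ℝ} (hmin : min p q ≤ 0) (hmax : max p q < 1) :
    GiniHardy p q := by
  obtain ⟨r, hr, hr1⟩ := exists_between (max_lt hmax one_pos)
  obtain ⟨hpqr, hr0⟩ := max_lt_iff.1 hr
  obtain ⟨hpr, hqr⟩ := max_lt_iff.1 hpqr
  have hardy := giniHardy_zero_right hr0 hr1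
  rcases min_le_iff.1 hmin with hp | hq
  · exact (hardy.mono hqr.le hp).symm
  · exact hardy.mono hpr.le hq

lemma tendsto_gini {a : ℕ → ℝ} (ha : ∀ n, 0 < a n) {p q : ℝ} (hpq : p ≠ q)
    (hp : Summable fun n => a n ^ p) (hq : Summable fun n => a n ^ q) :
    Tendsto (fun n => gini p q (n + 1) (fun k : Fin (n + 1) => a k)) atTop
      (𝓝 (((∑' n, a n ^ p) / ∑' n, a n ^ q) ^ (1 / (p - q)))) := by
  have tsum_pos {t : ℝ} (ht : Summable fun n => a n ^ t) : 0 < ∑' n, a n ^ t :=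
    ht.tsum_pos (fun n => Real.rpow_nonneg (ha n).le t) 0 (Real.rpow_pos_of_pos (ha 0) t)
  have tendsto_sum {t : ℝ} (ht : Summable fun n => a n ^ t) :
      Tendsto (fun n => ∑ k : Fin (n + 1), a k ^ t) atTop (𝓝 (∑' n, a n ^ t)) := by
    simpa only [sum_range] using (tendsto_add_atTop_iff_nat 1).2 ht.hasSum.tendsto_sum_nat
  simp only [gini, if_neg hpq]
  exact ((tendsto_sum hp).div (tendsto_sum hq) (tsum_pos hq).ne').rpow_const
    (Or.inl (div_pos (tsum_pos hp) (tsum_pos hq)).ne')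

lemma summable_geometric_rpow {r t : ℝ} (hr0 : 0 ≤ r) (hr1 : r < 1) (ht : 0 < t) :
    Summable fun n : ℕ => (r ^ n) ^ t := by
  simp only [← Real.rpow_natCast_mul hr0, mul_comm _ t, Real.rpow_mul_natCast hr0]
  exact summable_geometric_of_lt_one (Real.rpow_nonneg hr0 t) (Real.rpow_lt_one hr0 hr1 ht)

lemma not_giniWeakHardy_of_pos {p q : ℝ} (hp : 0 < p) (hq : 0 < q) (hpq : p ≠ q) :
    ¬ GiniWeakHardy p q := by
  intro h
  have terms_pos (n : ℕ) : (0 : ℝ) < (1 / 2) ^ n := by positivity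
  have summable_pow {t : ℝ} (ht : 0 < t) : Summable fun n : ℕ => ((1 / 2 : ℝ) ^ n) ^ t :=
    summable_geometric_rpow (by norm_num) (by norm_num) ht
  have tsum_pos {t : ℝ} (ht : 0 < t) : 0 < ∑' n : ℕ, ((1 / 2 : ℝ) ^ n) ^ t :=
    (summable_pow ht).tsum_pos (fun n => by positivity) 0 (by positivity)
  have limit_eq_zero := tendsto_nhds_unique
    (tendsto_gini terms_pos hpq (summable_pow hp) (summable_pow hq))
    (h _ terms_pos summable_geometric_two).tendsto_atTop_zero
  exact (Real.rpow_pos_of_pos (div_pos (tsum_pos hp) (tsum_pos hq)) _).ne' limit_eq_zero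

lemma GiniWeakHardy.min_nonpos {p q : ℝ} (h : GiniWeakHardy p q) : min p q ≤ 0 := by
  by_contra! hpos
  exact not_giniWeakHardy_of_pos hpos (half_pos hpos) (half_lt_self hpos).ne'
    (h.mono (min_le_left p q) ((half_le_self hpos.le).trans (min_le_right p q)))

/-- `1 / (n (1 + ⌊log₂ n⌋) ^ β)`, a form of `1 / (n (log n) ^ β)` whose Cauchy condensation is
exactly the `β`-series. The value at `n = 0` is `0`. -/
noncomputable def invMulLogRpow (β : ℝ) (n : ℕ) : ℝ :=
  (n * (1 + Nat.log 2 n : ℝ) ^ β)⁻¹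

lemma invMulLogRpow_nonneg (β : ℝ) (n : ℕ) : 0 ≤ invMulLogRpow β n := by
  unfold invMulLogRpow
  positivity

lemma invMulLogRpow_succ_pos (β : ℝ) (n : ℕ) : 0 < invMulLogRpow β (n + 1) := by
  unfold invMulLogRpow
  positivity

lemma invMulLogRpow_le_of_le {β : ℝ} (hβ : 0 ≤ β) ⦃m n : ℕ⦄ (hm : 0 < m) (hmn : m ≤ n) :
    invMulLogRpow β n ≤ invMulLogRpow β m := by
  have hlog : Nat.log 2 m ≤ Nat.log 2 n := Nat.log_mono_right hmn
  unfold invMulLogRpow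
  gcongr

lemma summable_invMulLogRpow_iff {β : ℝ} (hβ : 0 ≤ β) : Summable (invMulLogRpow β) ↔ 1 < β := by
  have condensed (k : ℕ) : (2 : ℝ) ^ k * invMulLogRpow β (2 ^ k) = 1 / ((k + 1 : ℕ) : ℝ) ^ β := by
    rw [invMulLogRpow, Nat.log_pow one_lt_two]
    push_cast
    field_simp
    rw [add_comm]
  rw [← summable_condensed_iff_of_nonneg (invMulLogRpow_nonneg β) (invMulLogRpow_le_of_le hβ),
    summable_congr condensed, ← Real.summable_one_div_nat_rpow,
    summable_nat_add_iff (f := fun n : ℕ => 1 / (n : ℝ) ^ β) 1]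

lemma rpow_mul_invMulLogRpow_rpow_neg {u : ℝ} (hu : 0 < u) (n : ℕ) :
    (n * invMulLogRpow ((1 + u) / u) n ^ (-u))⁻¹ ^ (1 + u)⁻¹ = invMulLogRpow 1 n := by
  have hu1 : 1 + u ≠ 0 := by positivity
  have hn : (0 : ℝ) ≤ n := n.cast_nonneg
  have hL : (0 : ℝ) ≤ 1 + Nat.log 2 n := by positivity
  have base_eq : n * invMulLogRpow ((1 + u) / u) n ^ (-u) =
      (n * (1 + Nat.log 2 n : ℝ)) ^ (1 + u) := by
    rw [Real.rpow_neg (invMulLogRpow_nonneg _ n), ← Real.inv_rpow (invMulLogRpow_nonneg _ n),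
      invMulLogRpow, inv_inv, Real.mul_rpow hn (Real.rpow_nonneg hL _), ← Real.rpow_mul hL,
      div_mul_cancel₀ _ hu.ne', Real.mul_rpow hn hL, Real.rpow_one_add' hn hu1, mul_assoc]
  rw [base_eq, Real.inv_rpow (by positivity), Real.rpow_rpow_inv (by positivity) hu1,
    invMulLogRpow, Real.rpow_one]

lemma rpow_le_gini_of_antitone {a : ℕ → ℝ} (ha : ∀ n, 0 < a n) (hanti : Antitone a) {p q : ℝ}
    (hq : q ≤ 0) (hqp : q < p) (n : ℕ) :
    (a 0 ^ p / ((n + 1) * a n ^ q)) ^ (1 / (p - q)) ≤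
      gini p q (n + 1) (fun k : Fin (n + 1) => a k) := by
  have rpow_pos (t : ℝ) (k : ℕ) : 0 < a k ^ t := Real.rpow_pos_of_pos (ha k) t
  have le_sum_p : a 0 ^ p ≤ ∑ k : Fin (n + 1), a k ^ p :=
    single_le_sum (f := fun k : Fin (n + 1) => a k ^ p) (fun k _ => (rpow_pos p k).le)
      (mem_univ (0 : Fin (n + 1)))
  have sum_q_le : ∑ k : Fin (n + 1), a k ^ q ≤ (n + 1) * a n ^ q := by
    have term_le (k : Fin (n + 1)) : a k ^ q ≤ a n ^ q :=
      Real.rpow_le_rpow_of_nonpos (ha n) (hanti k.is_le) hq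
    simpa using sum_le_card_nsmul univ _ _ fun (k : Fin (n + 1)) _ => term_le k
  have sum_q_pos : 0 < ∑ k : Fin (n + 1), a k ^ q :=
    sum_rpow_pos (a := fun k : Fin (n + 1) => a k) (fun k => ha k) q
  rw [gini, if_neg hqp.ne']
  exact Real.rpow_le_rpow (div_nonneg (rpow_pos p 0).le (sum_q_pos.le.trans sum_q_le))
    (div_le_div₀ ((rpow_pos p 0).le.trans le_sum_p) le_sum_p sum_q_pos sum_q_le)
    (one_div_nonneg.2 (sub_pos.2 hqp).le)

lemma not_giniWeakHardy_one_neg {u : ℝ} (hu : 0 < u) : ¬ GiniWeakHardy 1 (-u) := by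
  intro h
  set β : ℝ := (1 + u) / u
  have hβ : 1 < β := (one_lt_div hu).2 (lt_add_of_pos_left u one_pos)
  have hβ0 : 0 ≤ β := zero_le_one.trans hβ.le
  have summable_gini := h (fun n => invMulLogRpow β (n + 1)) (invMulLogRpow_succ_pos β)
    ((summable_nat_add_iff 1).2 ((summable_invMulLogRpow_iff hβ0).2 hβ))
  have antitone : Antitone fun n => invMulLogRpow β (n + 1) := fun m n hmn =>
    invMulLogRpow_le_of_le hβ0 m.succ_pos (Nat.succ_le_succ hmn)
  have le_gini (n : ℕ) : invMulLogRpow 1 (n + 1) ≤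
      gini 1 (-u) (n + 1) (fun k : Fin (n + 1) => invMulLogRpow β (k + 1)) := by
    have lower := rpow_le_gini_of_antitone (invMulLogRpow_succ_pos β) antitone
      (neg_nonpos.2 hu.le) (by linarith : -u < 1) n
    have first_eq_one : invMulLogRpow β (0 + 1) = 1 := by simp [invMulLogRpow]
    rw [← rpow_mul_invMulLogRpow_rpow_neg hu (n + 1)]
    simpa [first_eq_one] using lower
  have summable_log : Summable fun n => invMulLogRpow 1 (n + 1) :=
    summable_gini.of_nonneg_of_le (fun n => invMulLogRpow_nonneg 1 (n + 1)) le_gini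
  exact lt_irrefl 1 <|
    (summable_invMulLogRpow_iff zero_le_one).1 ((summable_nat_add_iff 1).1 summable_log)

lemma not_giniWeakHardy_of_one_le_left {p : ℝ} (hp : 1 ≤ p) (q : ℝ) : ¬ GiniWeakHardy p q :=
  fun h => not_giniWeakHardy_one_neg (u := max 1 (-q)) (by positivity)
    (h.mono hp (neg_le.1 (le_max_right 1 (-q))))

lemma GiniWeakHardy.max_lt_one {p q : ℝ} (h : GiniWeakHardy p q) : max p q < 1 :=
  max_lt (not_le.1 fun hp => not_giniWeakHardy_of_one_le_left hp q h)
    (not_le.1 fun hq => not_giniWeakHardy_of_one_le_left hq p h.symm)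

theorem stmt_10 (p q : ℝ) :
    (GiniWeakHardy p q ↔ (min p q ≤ 0 ∧ max p q < 1)) ∧
    (GiniWeakHardy p q ↔ GiniHardy p q) := by
  have hardy_of_weak (h : GiniWeakHardy p q) : GiniHardy p q :=
    giniHardy_of_min_nonpos_of_max_lt_one h.min_nonpos h.max_lt_one
  exact ⟨⟨fun h => ⟨h.min_nonpos, h.max_lt_one⟩,
      fun h => (giniHardy_of_min_nonpos_of_max_lt_one h.1 h.2).giniWeakHardy⟩,
    hardy_of_weak, GiniHardy.giniWeakHardy⟩
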